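/- arXiv:1910.06888 — 2 statements merged into one kernel-verified Lean document; each statement's English description precedes it below -/
import Mathlib

section
/- The hyperelliptic curve z² = (4x² + 1)(x² + 1)(x² + 4) has only finitely many rational points; that is, the set {(x, z) ∈ ℚ × ℚ : z² = (4x² + 1)(x² + 1)(x² + 4)} is finite. -/
lemma aux_sq16 (n : ℤ) : (n % 2 = 0 ∧ (n ^ 2 % 16 = 0 ∨ n ^ 2 % 16 = 4)) ∨
    (n % 2 = 1 ∧ (n ^ 2 % 16 = 1 ∨ n ^ 2 % 16 = 9)) := by
  have h : n % 16 = 0 ∨ n % 16 = 1 ∨ n % 16 = 2 ∨ n % 16 = 3 ∨ n % 16 = 4 ∨ n % 16 = 5 ∨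
    n % 16 = 6 ∨ n % 16 = 7 ∨ n % 16 = 8 ∨ n % 16 = 9 ∨ n % 16 = 10 ∨ n % 16 = 11 ∨
    n % 16 = 12 ∨ n % 16 = 13 ∨ n % 16 = 14 ∨ n % 16 = 15 := by omega
  have h2 : n % 2 = (n % 16) % 2 := by omega
  rw [h2, pow_two, Int.mul_emod]
  rcases h with h | h | h | h | h | h | h | h | h | h | h | h | h | h | h | h <;> rw [h] <;> simp

lemma aux_three (a b : ℤ) (h : 3 ∣ a ^ 2 + b ^ 2) : 3 ∣ a ∧ 3 ∣ b := by
  have ha : a % 3 = 0 ∨ a % 3 = 1 ∨ a % 3 = 2 := by omega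
  have hb : b % 3 = 0 ∨ b % 3 = 1 ∨ b % 3 = 2 := by omega
  have h' : (a ^ 2 + b ^ 2) % 3 = 0 := Int.emod_eq_zero_of_dvd h
  rw [pow_two, pow_two, Int.add_emod, Int.mul_emod, Int.mul_emod b] at h'
  rcases ha with ha | ha | ha <;> rcases hb with hb | hb | hb <;> rw [ha, hb] at h' <;>
    first | (exfalso; revert h'; decide) | (constructor <;> omega)

lemma aux_cop (a b p : ℤ) (h : IsCoprime a b) (hp : ¬ IsUnit p) (h1 : p ∣ a) (h2 : p ∣ b) :
    False := hp (h.isUnit_of_dvd' h1 h2)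

lemma aux_not3 (a b : ℤ) (h : IsCoprime a b) (h1 : 3 ∣ a) (h2 : 3 ∣ b) : False :=
  aux_cop a b 3 h (by decide) h1 h2

lemma aux_not2 (a b : ℤ) (h : IsCoprime a b) (h1 : a % 2 = 0) (h2 : b % 2 = 0) : False :=
  aux_cop a b 2 h (by decide) (Int.dvd_of_emod_eq_zero h1) (Int.dvd_of_emod_eq_zero h2)

lemma aux_four (u v p q : ℤ) (hu : u ≠ 0) (h : u * v = p * q) :
    ∃ x y z w : ℤ, u = x * y ∧ v = z * w ∧ p = x * z ∧ q = y * w := by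
  obtain ⟨g, y, z, hc, hu', hp'⟩ : ∃ g y z : ℤ, IsCoprime y z ∧ u = g * y ∧ p = g * z := by
    obtain ⟨y, z, hc, h1, h2⟩ := Int.exists_gcd_one (m := u) (n := p)
      (Int.gcd_pos_of_ne_zero_left _ hu)
    exact ⟨Int.gcd u p, y, z, Int.isCoprime_iff_gcd_eq_one.2 hc, by rw [mul_comm]; exact h1,
      by rw [mul_comm]; exact h2⟩
  have hg : g ≠ 0 := by rintro rfl; simp at hu'; exact hu hu'
  have e : y * v = z * q := by
    apply mul_left_cancel₀ hg
    rw [hu', hp'] at h; linarith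
  obtain ⟨w, hw⟩ : y ∣ q := hc.dvd_of_dvd_mul_left ⟨v, e.symm⟩
  have hy : y ≠ 0 := by rintro rfl; simp at hu'; exact hu hu'
  refine ⟨g, y, z, w, hu', ?_, hp', hw⟩
  apply mul_left_cancel₀ hy
  rw [e, hw]; ring

lemma aux_bad (x y z w k : ℤ) (hxw : IsCoprime x w) (hyz : IsCoprime y z)
    (h1 : y ^ 2 - 9 * z ^ 2 = w ^ 2 * k) (h2 : y ^ 2 - z ^ 2 = x ^ 2 * k)
    (hk : k = 2 ∨ k = -2 ∨ k = 4 ∨ k = -4) : False := by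
  have X := aux_sq16 x
  have Y := aux_sq16 y
  have Z := aux_sq16 z
  have W := aux_sq16 w
  have nxw := aux_not2 x w hxw
  have nyz := aux_not2 y z hyz
  generalize x ^ 2 = x2 at *
  generalize y ^ 2 = y2 at *
  generalize z ^ 2 = z2 at *
  generalize w ^ 2 = w2 at *
  rcases hk with rfl | rfl | rfl | rfl <;> rcases X with ⟨hx, X⟩ | ⟨hx, X⟩ <;>
    rcases W with ⟨hw, W⟩ | ⟨hw, W⟩ <;> first | exact (nxw hx hw).elim | skip <;>
    rcases Y with ⟨hy, Y⟩ | ⟨hy, Y⟩ <;>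
    rcases Z with ⟨hz, Z⟩ | ⟨hz, Z⟩ <;> first | exact (nyz hy hz).elim | skip <;> clear nxw nyz <;> omega

/-- Core of the descent: the quadratic system yields a smaller solution. -/
lemma aux_core (x y z w : ℤ) (hx : x ≠ 0) (hy : y ≠ 0) (hz : z ≠ 0) (hw : w ≠ 0)
    (hxw : IsCoprime x w) (hyz : IsCoprime y z)
    (h : x ^ 2 * y ^ 2 + z ^ 2 * w ^ 2 = 9 * (x ^ 2 * z ^ 2) + y ^ 2 * w ^ 2) :
    ∃ i j g h : ℤ, IsCoprime i j ∧ j ≠ 0 ∧ i ^ 2 = j ^ 2 + g ^ 2 ∧ i ^ 2 = 9 * j ^ 2 + h ^ 2 ∧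
      j ∣ x * y * z * w := by
  have e : x ^ 2 * (y ^ 2 - 9 * z ^ 2) = w ^ 2 * (y ^ 2 - z ^ 2) := by linarith
  obtain ⟨k, hk⟩ : w ^ 2 ∣ y ^ 2 - 9 * z ^ 2 :=
    (hxw.symm.pow (m := 2) (n := 2)).dvd_of_dvd_mul_left ⟨_, e⟩
  have hk2 : y ^ 2 - z ^ 2 = x ^ 2 * k := by
    apply mul_left_cancel₀ (pow_ne_zero 2 hw)
    rw [← e, hk]; ring
  have hk8 : k ∣ 8 := by
    obtain ⟨s, t, hst⟩ := hyz.pow (m := 2) (n := 2)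
    refine ⟨s * (9 * x ^ 2 - w ^ 2) + t * (x ^ 2 - w ^ 2), ?_⟩
    linear_combination (-8) * hst + (s * 9 + t) * hk2 - (s + t) * hk
  have hle : k ≤ 8 := Int.le_of_dvd (by norm_num) hk8
  have hge : -k ≤ 8 := Int.le_of_dvd (by norm_num) ((neg_dvd).2 hk8)
  have hge' : -8 ≤ k := by linarith
  have hcases : (k = 1 ∨ k = -1 ∨ k = 8 ∨ k = -8) ∨ (k = 2 ∨ k = -2 ∨ k = 4 ∨ k = -4) := by
    clear hk hk2 h e
    interval_cases k <;> first | decide | (exfalso; revert hk8; decide)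
  rcases hcases with hcases | hcases
  swap
  · exact (aux_bad x y z w k hxw hyz hk hk2 hcases).elim
  rcases hcases with rfl | rfl | rfl | rfl
  · exact ⟨y, z, x, w, hyz, hz, by linarith, by linarith, ⟨x * y * w, by ring⟩⟩
  · obtain ⟨⟨y', hy'⟩, ⟨w', hw'⟩⟩ := aux_three y w ⟨3 * z ^ 2, by linarith⟩
    subst hy' hw'
    refine ⟨z, y', w', x, (IsCoprime.of_mul_left_right hyz).symm, ?_, by linarith, by linarith,
      ⟨x * 3 * z * (3 * w'), by ring⟩⟩
    rintro rfl; simp at hy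
  · obtain ⟨⟨y', hy'⟩, ⟨w', hw'⟩⟩ := aux_three y w ⟨3 * x ^ 2, by linarith⟩
    subst hy' hw'
    refine ⟨x, w', y', z, IsCoprime.of_mul_right_right hxw, ?_, by linarith, by linarith,
      ⟨x * (3 * y') * z * 3, by ring⟩⟩
    rintro rfl; simp at hw
  · exact ⟨w, x, z, y, hxw.symm, hx, by linarith, by linarith, ⟨y * z * w, by ring⟩⟩

/-- One descent step from the pair of parametrizations. -/
lemma aux_step (u v p q : ℤ) (huv : IsCoprime u v) (hpq : IsCoprime p q) (h0 : u * v ≠ 0)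
    (h1 : p * q = 3 * (u * v)) (h2 : u ^ 2 + v ^ 2 = p ^ 2 + q ^ 2) :
    ∃ i j g h : ℤ, IsCoprime i j ∧ j ≠ 0 ∧ i ^ 2 = j ^ 2 + g ^ 2 ∧ i ^ 2 = 9 * j ^ 2 + h ^ 2 ∧
      j ∣ u * v := by
  wlog h3 : (3 : ℤ) ∣ p generalizing p q
  · have hq3 : (3 : ℤ) ∣ q := (Int.prime_three.dvd_or_dvd ⟨_, h1⟩).resolve_left h3
    exact this q p hpq.symm (by linarith) (by linarith) hq3
  obtain ⟨p', rfl⟩ := h3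
  have hu : u ≠ 0 := left_ne_zero_of_mul h0
  obtain ⟨x, y, z, w, rfl, rfl, rfl, rfl⟩ := aux_four u v p' q hu (by linarith)
  have hx : x ≠ 0 := by rintro rfl; simp at h0
  have hy : y ≠ 0 := by rintro rfl; simp at h0
  have hz : z ≠ 0 := by rintro rfl; simp at h0
  have hw : w ≠ 0 := by rintro rfl; simp at h0
  have hxw : IsCoprime x w := by
    refine hpq.of_isCoprime_of_dvd_left ⟨3 * z, by ring⟩ |>.of_isCoprime_of_dvd_right ⟨y, by ring⟩
  have hyz : IsCoprime y z := by
    refine huv.of_isCoprime_of_dvd_left ⟨x, by ring⟩ |>.of_isCoprime_of_dvd_right ⟨w, by ring⟩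
  obtain ⟨i, j, g, h, a1, a2, a3, a4, a5⟩ := aux_core x y z w hx hy hz hw hxw hyz (by linarith)
  exact ⟨i, j, g, h, a1, a2, a3, a4, by rw [← mul_assoc]; exact a5⟩

lemma aux_parity (i j g h : ℤ) (hc : IsCoprime i j) (h1 : i ^ 2 = j ^ 2 + g ^ 2)
    (h2 : i ^ 2 = 9 * j ^ 2 + h ^ 2) : g % 2 = 1 ∧ h % 2 = 1 := by
  have X := aux_sq16 i
  have Y := aux_sq16 j
  have Z := aux_sq16 g
  have W := aux_sq16 h
  have n := aux_not2 i j hc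
  generalize i ^ 2 = x2 at *
  generalize j ^ 2 = y2 at *
  generalize g ^ 2 = z2 at *
  generalize h ^ 2 = w2 at *
  rcases X with ⟨hx, X⟩ | ⟨hx, X⟩ <;> rcases Y with ⟨hy, Y⟩ | ⟨hy, Y⟩ <;>
    first | exact (n hx hy).elim | skip <;> clear n <;> omega

lemma aux_descent (n : ℕ) : ∀ i j g h : ℤ, j.natAbs = n → IsCoprime i j →
    i ^ 2 = j ^ 2 + g ^ 2 → i ^ 2 = 9 * j ^ 2 + h ^ 2 → j = 0 := by
  induction n using Nat.strong_induction_on with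
  | _ n ih =>
  intro i j g h hn hc h1 h2
  wlog hi : 0 < i generalizing i
  · rcases lt_trichotomy i 0 with hi' | hi' | hi'
    · exact this (-i) hc.neg_left (by linarith) (by linarith) (by linarith)
    · subst hi'
      have : j ^ 2 = 0 := by nlinarith [sq_nonneg j, sq_nonneg g]
      exact pow_eq_zero_iff (two_ne_zero) |>.1 this
    · exact absurd hi' hi
  by_contra hj
  obtain ⟨pg, ph⟩ := aux_parity i j g h hc h1 h2
  have cgj : IsCoprime g j := by
    have : IsCoprime (g ^ 2 + j * j) j := by
      have := hc.pow_left (m := 2)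
      rw [h1] at this
      convert this using 1; ring
    exact (IsCoprime.pow_left_iff two_pos).1 ((IsCoprime.add_mul_left_left_iff).1 this)
  have i3 : ¬ (3 : ℤ) ∣ i := by
    intro h3
    have : (3 : ℤ) ∣ j ^ 2 + g ^ 2 := by rw [← h1]; exact dvd_pow h3 two_ne_zero
    exact aux_not3 i j hc h3 (aux_three _ _ this).1
  have ci3j : IsCoprime i (3 * j) := by
    refine IsCoprime.mul_right ?_ hc
    exact ((Int.prime_three.coprime_iff_not_dvd).2 i3).symm
  have chj : IsCoprime h (3 * j) := by
    have : IsCoprime (h ^ 2 + (3 * j) * (3 * j)) (3 * j) := by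
      have := ci3j.pow_left (m := 2)
      rw [h2] at this
      convert this using 1; ring
    exact (IsCoprime.pow_left_iff two_pos).1 ((IsCoprime.add_mul_left_left_iff).1 this)
  obtain ⟨u, v, -, j1, i1, c1, -, -⟩ := PythagoreanTriple.coprime_classification'
    (x := g) (y := j) (z := i) (by unfold PythagoreanTriple; linarith)
    (Int.isCoprime_iff_gcd_eq_one.1 cgj) pg hi
  obtain ⟨p, q, -, j2, i2, c2, -, -⟩ := PythagoreanTriple.coprime_classification'
    (x := h) (y := 3 * j) (z := i) (by unfold PythagoreanTriple; linarith)
    (Int.isCoprime_iff_gcd_eq_one.1 chj) ph hi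
  have huv0 : u * v ≠ 0 := by
    intro h0; apply hj; rw [j1, mul_assoc, h0, mul_zero]
  obtain ⟨i', j', g', h', b1, b2, b3, b4, b5⟩ := aux_step u v p q
    (Int.isCoprime_iff_gcd_eq_one.2 c1) (Int.isCoprime_iff_gcd_eq_one.2 c2) huv0
    (by linarith) (by linarith)
  refine b2 (ih j'.natAbs ?_ i' j' g' h' rfl b1 b3 b4)
  have hle : j'.natAbs ≤ (u * v).natAbs := Nat.le_of_dvd (Int.natAbs_pos.2 huv0)
    (Int.natAbs_dvd_natAbs.2 b5)
  have : j.natAbs = 2 * (u * v).natAbs := by rw [j1, mul_assoc, Int.natAbs_mul]; rfl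
  have := Int.natAbs_pos.2 huv0
  omega

/-- `a² + b²` and `a² + 4b²` both squares, `a` odd and coprime to `b`, forces `ab = 0`. -/
lemma aux_two (a b c e : ℤ) (hab : IsCoprime a b) (ha : a % 2 = 1)
    (h1 : a ^ 2 + b ^ 2 = c ^ 2) (h2 : a ^ 2 + 4 * b ^ 2 = e ^ 2) : a * b = 0 := by
  have c2 : IsCoprime (2 : ℤ) a := by
    refine (Int.prime_two.coprime_iff_not_dvd).2 ?_; omega
  have hca : IsCoprime c a := by
    refine (IsCoprime.pow_left_iff two_pos).1 ?_
    rw [← h1, show a ^ 2 + b ^ 2 = b ^ 2 + a * a by ring, IsCoprime.add_mul_left_left_iff]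
    exact hab.symm.pow_left
  have hcb : IsCoprime c b := by
    refine (IsCoprime.pow_left_iff two_pos).1 ?_
    rw [← h1, show a ^ 2 + b ^ 2 = a ^ 2 + b * b by ring, IsCoprime.add_mul_left_left_iff]
    exact hab.pow_left
  have hea : IsCoprime e a := by
    refine (IsCoprime.pow_left_iff two_pos).1 ?_
    rw [← h2, show a ^ 2 + 4 * b ^ 2 = (2 * b) ^ 2 + a * a by ring,
      IsCoprime.add_mul_left_left_iff]
    exact (c2.mul_left hab.symm).pow_left
  have heb : IsCoprime e b := by
    refine (IsCoprime.pow_left_iff two_pos).1 ?_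
    rw [← h2, show a ^ 2 + 4 * b ^ 2 = a ^ 2 + b * (4 * b) by ring,
      IsCoprime.add_mul_left_left_iff]
    exact hab.pow_left
  have hc : IsCoprime (c * e) (a * b) := (hca.mul_right hcb).mul_left (hea.mul_right heb)
  refine aux_descent _ (c * e) (a * b) (a ^ 2 + 2 * b ^ 2) (a ^ 2 - 2 * b ^ 2) rfl hc ?_ ?_
  · rw [mul_pow, ← h1, ← h2]; ring
  · rw [mul_pow, ← h1, ← h2]; ring

lemma aux_sq_pos (a b c : ℤ) (hab : IsCoprime a b) (ha : 0 ≤ a) (h : a * b = c ^ 2) :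
    ∃ d, a = d ^ 2 := by
  obtain ⟨d, hd | hd⟩ := Int.sq_of_isCoprime hab h
  · exact ⟨d, hd⟩
  · exact ⟨0, by nlinarith [sq_nonneg d]⟩

lemma aux_int (a b c : ℤ) (hab : IsCoprime a b)
    (h : (4 * a ^ 2 + b ^ 2) * (a ^ 2 + b ^ 2) * (a ^ 2 + 4 * b ^ 2) = c ^ 2) : a * b = 0 := by
  have hab2 : IsCoprime (a ^ 2) (b ^ 2) := hab.pow
  have n3 : ∀ s t : ℤ, IsCoprime s t → IsCoprime 3 (s ^ 2 + t ^ 2) := by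
    intro s t hst
    refine (Int.prime_three.coprime_iff_not_dvd).2 fun h3 => ?_
    obtain ⟨h4, h5⟩ := aux_three _ _ h3
    exact aux_not3 s t hst h4 h5
  have k3 := n3 a b hab
  have key1 : IsCoprime (a ^ 2 + b ^ 2) (4 * a ^ 2 + b ^ 2) := by
    rw [show 4 * a ^ 2 + b ^ 2 = 3 * a ^ 2 + (a ^ 2 + b ^ 2) * 1 by ring,
      IsCoprime.add_mul_left_right_iff]
    refine k3.symm.mul_right ?_
    rw [show a ^ 2 + b ^ 2 = b ^ 2 + a ^ 2 * 1 by ring, IsCoprime.add_mul_left_left_iff]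
    exact hab2.symm
  have key2 : IsCoprime (a ^ 2 + b ^ 2) (a ^ 2 + 4 * b ^ 2) := by
    rw [show a ^ 2 + 4 * b ^ 2 = 3 * b ^ 2 + (a ^ 2 + b ^ 2) * 1 by ring,
      IsCoprime.add_mul_left_right_iff]
    refine k3.symm.mul_right ?_
    rw [show a ^ 2 + b ^ 2 = a ^ 2 + b ^ 2 * 1 by ring, IsCoprime.add_mul_left_left_iff]
    exact hab2
  have h' : (a ^ 2 + b ^ 2) * ((4 * a ^ 2 + b ^ 2) * (a ^ 2 + 4 * b ^ 2)) = c ^ 2 := by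
    rw [← h]; ring
  obtain ⟨r, hr⟩ := aux_sq_pos _ _ _ (key1.mul_right key2) (by positivity) h'
  have h'' : ((4 * a ^ 2 + b ^ 2) * (a ^ 2 + 4 * b ^ 2)) * (a ^ 2 + b ^ 2) = c ^ 2 := by
    rw [← h]; ring
  obtain ⟨m, hm⟩ := aux_sq_pos _ _ _ (key1.mul_right key2).symm (by positivity) h''
  have n5 : ¬ (5 : ℤ) ∣ 4 * a ^ 2 + b ^ 2 := by
    intro h5
    have hz : (4 * (a : ZMod 5) ^ 2 + (b : ZMod 5) ^ 2) = 0 := by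
      have := (ZMod.intCast_zmod_eq_zero_iff_dvd (4 * a ^ 2 + b ^ 2) 5).2 (by exact_mod_cast h5)
      push_cast at this; exact this
    have hr5 : (a : ZMod 5) ^ 2 + (b : ZMod 5) ^ 2 = (r : ZMod 5) ^ 2 := by exact_mod_cast congrArg (Int.cast (R := ZMod 5)) hr
    have dec : ∀ x y z : ZMod 5, 4 * x ^ 2 + y ^ 2 = 0 → x ^ 2 + y ^ 2 = z ^ 2 → x = 0 ∧ y = 0 := by
      decide
    obtain ⟨za, zb⟩ := dec _ _ _ hz hr5
    exact aux_cop a b 5 hab (by decide)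
      (by exact_mod_cast (ZMod.intCast_zmod_eq_zero_iff_dvd a 5).1 za)
      (by exact_mod_cast (ZMod.intCast_zmod_eq_zero_iff_dvd b 5).1 zb)
  have p5 : Prime (5 : ℤ) := by exact_mod_cast Nat.prime_iff_prime_int.1 Nat.prime_five
  have c5 : IsCoprime (4 * a ^ 2 + b ^ 2) 5 := ((p5.coprime_iff_not_dvd).2 n5).symm
  have c3 : IsCoprime (4 * a ^ 2 + b ^ 2) 3 := by
    have := k3.symm
    rw [show 4 * a ^ 2 + b ^ 2 = a ^ 2 + b ^ 2 + 3 * a ^ 2 by ring,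
      IsCoprime.add_mul_left_left_iff]
    exact this
  have key3 : IsCoprime (4 * a ^ 2 + b ^ 2) (a ^ 2 + 4 * b ^ 2) := by
    have h1 : IsCoprime (4 * a ^ 2 + b ^ 2) (3 * 5 * a ^ 2) := by
      refine (c3.mul_right c5).mul_right ?_
      rw [show 4 * a ^ 2 + b ^ 2 = b ^ 2 + a ^ 2 * 4 by ring, IsCoprime.add_mul_left_left_iff]
      exact hab2.symm
    have h2 := h1.neg_right
    rw [show a ^ 2 + 4 * b ^ 2 = -(3 * 5 * a ^ 2) + (4 * a ^ 2 + b ^ 2) * 4 by ring,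
      IsCoprime.add_mul_left_right_iff]
    exact h2
  obtain ⟨s, hs⟩ := aux_sq_pos _ _ _ key3 (by positivity) hm
  obtain ⟨t, ht⟩ := aux_sq_pos _ _ m key3.symm (by positivity) (by rw [← hm]; ring)
  by_cases ha : a % 2 = 1
  · exact aux_two a b r t hab ha hr ht
  · have hb : b % 2 = 1 := by
      by_contra hb
      exact aux_not2 a b hab (by omega) (by omega)
    rw [mul_comm]
    exact aux_two b a r s hab.symm hb (by linarith) (by linarith)

/-- The hyperelliptic genus-two curve `z² = (4x² + 1)(x² + 1)(x² + 4)` has only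
finitely many rational points. -/
theorem finitely_many_rational_points_on_hyperelliptic_curve :
    {p : ℚ × ℚ | p.2 ^ 2 = (4 * p.1 ^ 2 + 1) * (p.1 ^ 2 + 1) * (p.1 ^ 2 + 4)}.Finite := by
  refine Set.Finite.subset (Set.toFinite {((0 : ℚ), (2 : ℚ)), (0, -2)}) ?_
  rintro ⟨x, z⟩ h
  simp only [Set.mem_setOf_eq] at h
  have hd : (x.den : ℚ) ≠ 0 := by exact_mod_cast x.den_nz
  have hx : x * x.den = x.num := Rat.mul_den_eq_num x
  have hsq : IsSquare (((4 * x.num ^ 2 + (x.den : ℤ) ^ 2) * (x.num ^ 2 + (x.den : ℤ) ^ 2) *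
      (x.num ^ 2 + 4 * (x.den : ℤ) ^ 2) : ℤ) : ℚ) := by
    refine ⟨z * (x.den : ℚ) ^ 3, ?_⟩
    push_cast
    rw [← hx]
    linear_combination (-(x.den : ℚ) ^ 6) * h
  rw [Rat.isSquare_intCast_iff] at hsq
  obtain ⟨c, hc⟩ := hsq
  have h0 := aux_int x.num x.den c (Rat.isCoprime_num_den x) (by rw [hc]; ring)
  have hx0 : x = 0 := by
    rcases mul_eq_zero.1 h0 with h1 | h1
    · exact Rat.num_eq_zero.1 h1
    · exact absurd h1 (by exact_mod_cast x.den_nz)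
  subst hx0
  have : (z - 2) * (z + 2) = 0 := by linear_combination h
  rcases mul_eq_zero.1 this with h1 | h1
  · left; rw [sub_eq_zero.1 h1]
  · right; rw [eq_neg_of_add_eq_zero_left h1]; rfl
end

section
/- Let λ be a rational number with λ ≠ 0 and λ² < 1. The affine curve X₁₂ ⊂ ℂ⁴ defined by the three equations 1 − x² − y² + 2λxy = 0, 4t₁² − 2x² − 2y² + 1 = 0 and 4t₂² − 2x² − 2 + y² = 0 is irreducible; equivalently, the zero locus of the ideal generated by these three polynomials in the prime spectrum of ℂ[x, y, t₁, t₂] is an irreducible closed set. -/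
open MvPolynomial

/-- Linear independence of `1, s, t, st` over `K` when `α = s²`, `β = t²`, `αβ` are nonsquares. -/
lemma biquad_indep {K L : Type*} [Field K] [Field L] [Algebra K L] [CharZero K]
    (α β : K) (s t : L) (hs : s ^ 2 = algebraMap K L α) (ht : t ^ 2 = algebraMap K L β)
    (h1 : ∀ z : K, z ^ 2 ≠ α) (h2 : ∀ z : K, z ^ 2 ≠ β) (h3 : ∀ z : K, z ^ 2 ≠ α * β)
    (a b c d : K)
    (h : algebraMap K L a + algebraMap K L b * s + algebraMap K L c * t
      + algebraMap K L d * (s * t) = 0) : a = 0 ∧ b = 0 ∧ c = 0 ∧ d = 0 := by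
  have inj : Function.Injective (algebraMap K L) := (algebraMap K L).injective
  -- independence of `1, s`
  have two : ∀ a b : K, algebraMap K L a + algebraMap K L b * s = 0 → a = 0 ∧ b = 0 := by
    intro a b hab
    have hb : b = 0 := by
      by_contra hb
      apply h1 (-a / b)
      apply inj
      have hb' : algebraMap K L b ≠ 0 := by simpa using hb
      rw [← hs, map_pow, map_div₀, map_neg]
      have : s = -algebraMap K L a / algebraMap K L b := by
        field_simp
        linear_combination hab
      rw [this]
    subst hb
    refine ⟨?_, rfl⟩
    apply inj
    simpa using hab
  by_cases hcd : c ^ 2 - d ^ 2 * α = 0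
  · have hd : d = 0 := by
      by_contra hd
      apply h1 (c / d)
      field_simp
      linear_combination hcd
    subst hd
    have hc : c = 0 := by simpa using hcd
    subst hc
    have := two a b (by simpa using h)
    tauto
  · exfalso
    have hN : algebraMap K L (c ^ 2 - d ^ 2 * α) ≠ 0 := by
      intro h0
      exact hcd (inj (by rw [h0, map_zero]))
    obtain ⟨e, f, hef⟩ : ∃ e f : K, t = algebraMap K L e + algebraMap K L f * s := by
      refine ⟨-(a * c - b * d * α) / (c ^ 2 - d ^ 2 * α),
        -(b * c - a * d) / (c ^ 2 - d ^ 2 * α), ?_⟩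
      rw [map_div₀, map_div₀]
      field_simp
      simp only [map_sub, map_neg, map_mul, map_pow, ← hs]
      linear_combination (algebraMap K L c - algebraMap K L d * s) * h
    have h4 := two (e ^ 2 + f ^ 2 * α - β) (2 * e * f) (by
      simp only [map_sub, map_add, map_mul, map_pow, ← hs, ← ht, hef, map_ofNat]
      ring)
    obtain ⟨h5, h6⟩ := h4
    have h7 : e = 0 ∨ f = 0 := by simpa using h6
    rcases h7 with rfl | rfl
    · exact h3 (f * α) (by linear_combination α * h5)
    · exact h2 e (by linear_combination h5)

/-- A polynomial with a simple root is not a square in the field of rational functions. -/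
lemma nonsquare_of_simple_root (g : Polynomial ℂ) (r : ℂ) (h0 : g.eval r = 0)
    (h1 : g.derivative.eval r ≠ 0) (z : RatFunc ℂ) :
    z ^ 2 ≠ algebraMap (Polynomial ℂ) (RatFunc ℂ) g := by
  intro hz
  have hint : IsIntegral (Polynomial ℂ) z := by
    apply IsIntegral.of_pow (n := 2) (by norm_num)
    rw [hz]
    exact isIntegral_algebraMap
  obtain ⟨h, rfl⟩ := IsIntegrallyClosed.isIntegral_iff.mp hint
  rw [← map_pow] at hz
  have hg : h ^ 2 = g := IsFractionRing.injective (Polynomial ℂ) (RatFunc ℂ) hz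
  subst hg
  have hr : h.eval r = 0 := by simpa using h0
  apply h1
  simp [Polynomial.derivative_pow, hr]

/-- Normal forms: multiplied by a power of the unit `u`. -/
def HasNF {A : Type*} [CommRing A] [Algebra ℂ A] (u S T : A) (z : A) : Prop :=
  ∃ (n : ℕ) (a b c d : Polynomial ℂ), u ^ n * z = Polynomial.aeval u a + Polynomial.aeval u b * S
    + Polynomial.aeval u c * T + Polynomial.aeval u d * (S * T)

section NF

variable {A : Type*} [CommRing A] [Algebra ℂ A] {u v S T : A}

lemma HasNF.add {z w : A} (hz : HasNF u S T z) (hw : HasNF u S T w) : HasNF u S T (z + w) := by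
  obtain ⟨n, a, b, c, d, h⟩ := hz
  obtain ⟨m, a', b', c', d', h'⟩ := hw
  refine ⟨n + m, Polynomial.X ^ m * a + Polynomial.X ^ n * a',
    Polynomial.X ^ m * b + Polynomial.X ^ n * b', Polynomial.X ^ m * c + Polynomial.X ^ n * c',
    Polynomial.X ^ m * d + Polynomial.X ^ n * d', ?_⟩
  simp only [map_add, map_mul, map_pow, Polynomial.aeval_X]
  linear_combination u ^ m * h + u ^ n * h'

lemma HasNF.poly_mul {z : A} (hz : HasNF u S T z) (p : Polynomial ℂ) :
    HasNF u S T (Polynomial.aeval u p * z) := by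
  obtain ⟨n, a, b, c, d, h⟩ := hz
  refine ⟨n, p * a, p * b, p * c, p * d, ?_⟩
  simp only [map_mul]
  linear_combination Polynomial.aeval u p * h

lemma HasNF.smul {z : A} (hz : HasNF u S T z) (k : ℂ) :
    HasNF u S T (algebraMap ℂ A k * z) := by
  simpa using hz.poly_mul (Polynomial.C k)

lemma HasNF.u_mul {z : A} (hz : HasNF u S T z) : HasNF u S T (u * z) := by
  simpa using hz.poly_mul Polynomial.X

lemma HasNF.v_mul {z : A} (huv : u * v = 1) (hz : HasNF u S T z) : HasNF u S T (v * z) := by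
  obtain ⟨n, a, b, c, d, h⟩ := hz
  refine ⟨n + 1, a, b, c, d, ?_⟩
  linear_combination h + u ^ n * z * huv

lemma HasNF.S_mul {z : A} (g : Polynomial ℂ) (hS : S ^ 2 = Polynomial.aeval u g)
    (hz : HasNF u S T z) : HasNF u S T (S * z) := by
  obtain ⟨n, a, b, c, d, h⟩ := hz
  refine ⟨n, g * b, a, g * d, c, ?_⟩
  simp only [map_mul, ← hS]
  linear_combination S * h

lemma HasNF.T_mul {z : A} (g : Polynomial ℂ) (hT : T ^ 2 = Polynomial.aeval u g)
    (hz : HasNF u S T z) : HasNF u S T (T * z) := by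
  obtain ⟨n, a, b, c, d, h⟩ := hz
  refine ⟨n, g * c, g * d, a, b, ?_⟩
  simp only [map_mul, ← hT]
  linear_combination T * h

lemma HasNF.one : HasNF u S T (1 : A) := ⟨0, 1, 0, 0, 0, by simp⟩

end NF

/-- First quartic. -/
noncomputable def G1 (l w : ℂ) : Polynomial ℂ :=
  4 * (Polynomial.C (l * (2 * l - w)) * Polynomial.X ^ 2 - 1)
    * (Polynomial.X ^ 2 - Polynomial.C (l * w))

/-- Second quartic. -/
noncomputable def G2 (l w : ℂ) : Polynomial ℂ :=
  (Polynomial.C (2 * (2 * l - w) ^ 2 - 1) * Polynomial.X ^ 2 - 1)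
    * (Polynomial.X ^ 2 - Polynomial.C (2 * w ^ 2 - 1))

lemma aeval_G1 {A : Type*} [CommRing A] [Algebra ℂ A] (m w : ℂ) (u : A) :
    Polynomial.aeval u (G1 m w) = 4 * ((algebraMap ℂ A m * (2 * algebraMap ℂ A m
      - algebraMap ℂ A w)) * u ^ 2 - 1) * (u ^ 2 - algebraMap ℂ A m * algebraMap ℂ A w) := by
  simp [G1, map_ofNat (algebraMap ℂ A), map_ofNat (Polynomial.aeval u)]

lemma aeval_G2 {A : Type*} [CommRing A] [Algebra ℂ A] (m w : ℂ) (u : A) :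
    Polynomial.aeval u (G2 m w) = ((2 * (2 * algebraMap ℂ A m - algebraMap ℂ A w) ^ 2 - 1)
      * u ^ 2 - 1) * (u ^ 2 - (2 * algebraMap ℂ A w ^ 2 - 1)) := by
  simp [G2, map_ofNat (algebraMap ℂ A)]

lemma conic_identities {A : Type*} [CommRing A] (m w e u v x y : A)
    (hw : w ^ 2 = 2 * m * w - 1) (he : e * (2 * w - 2 * m) = 1) (huv : u * v = 1)
    (hx : x = e * (w * v - (2 * m - w) * u)) (hy : y = e * (v - u)) :
    1 - x ^ 2 - y ^ 2 + 2 * m * x * y = 0 ∧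
    (2 * w - 2 * m) ^ 2 * u ^ 2 * (2 * x ^ 2 + 2 * y ^ 2 - 1)
      = 4 * ((m * (2 * m - w)) * u ^ 2 - 1) * (u ^ 2 - m * w) ∧
    (2 * w - 2 * m) ^ 2 * u ^ 2 * (2 * x ^ 2 + 2 - y ^ 2)
      = ((2 * (2 * m - w) ^ 2 - 1) * u ^ 2 - 1) * (u ^ 2 - (2 * w ^ 2 - 1)) := by
  have ha : (2 * w - 2 * m) * u * x = w - (2 * m - w) * u ^ 2 := by
    rw [hx]
    linear_combination (u * (w * v - (2 * m - w) * u)) * he + w * huv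
  have hb : (2 * w - 2 * m) * u * y = 1 - u ^ 2 := by
    rw [hy]
    linear_combination (u * (v - u)) * he + huv
  generalize hP : w - (2 * m - w) * u ^ 2 = P at ha
  generalize hQ : 1 - u ^ 2 = Q at hb
  refine ⟨?_, ?_, ?_⟩
  · have key : (2 * w - 2 * m) ^ 2 * u ^ 2 * (1 - x ^ 2 - y ^ 2 + 2 * m * x * y) = 0 := by
      have : (2 * w - 2 * m) ^ 2 * u ^ 2 * (1 - x ^ 2 - y ^ 2 + 2 * m * x * y)
        = (2 * w - 2 * m) ^ 2 * u ^ 2 - P ^ 2 - Q ^ 2 + 2 * m * P * Q := by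
        rw [← ha, ← hb]; ring
      rw [this, ← hP, ← hQ]
      linear_combination (-(u ^ 2 - 1) ^ 2) * hw
    have h1 : (e * v) ^ 2 * ((2 * w - 2 * m) ^ 2 * u ^ 2) = 1 := by
      have : (e * v) ^ 2 * ((2 * w - 2 * m) ^ 2 * u ^ 2)
        = (e * (2 * w - 2 * m)) ^ 2 * (u * v) ^ 2 := by ring
      rw [this, he, huv]; ring
    have h2 := congrArg (fun z => (e * v) ^ 2 * z) key
    simp only [← mul_assoc, mul_zero] at h2
    simp only [← mul_assoc] at h1
    simpa only [h1, one_mul] using h2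
  · have : (2 * w - 2 * m) ^ 2 * u ^ 2 * (2 * x ^ 2 + 2 * y ^ 2 - 1)
        = 2 * P ^ 2 + 2 * Q ^ 2 - (2 * w - 2 * m) ^ 2 * u ^ 2 := by
      rw [← ha, ← hb]; ring
    rw [this, ← hP, ← hQ]
    linear_combination (2 * u ^ 4 - 4 * m ^ 2 * u ^ 2 + 2) * hw
  · have : (2 * w - 2 * m) ^ 2 * u ^ 2 * (2 * x ^ 2 + 2 - y ^ 2)
        = 2 * P ^ 2 - Q ^ 2 + 2 * (2 * w - 2 * m) ^ 2 * u ^ 2 := by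
      rw [← ha, ← hb]; ring
    rw [this, ← hP, ← hQ]
    linear_combination (4 * u ^ 2 * (w ^ 2 - 2 * m * w + 1)) * hw

lemma roots_exist (l : ℚ) (hl0 : l ≠ 0) (hl1 : l ^ 2 < 1) (w : ℂ)
    (hw : w ^ 2 = 2 * (l : ℂ) * w - 1) :
    (∃ r, (G1 l w).eval r = 0 ∧ (G1 l w).derivative.eval r ≠ 0 ∧ (G2 l w).eval r ≠ 0) ∧
    (∃ r, (G2 l w).eval r = 0 ∧ (G2 l w).derivative.eval r ≠ 0) := by
  have q0 : (l : ℂ) ≠ 0 := by exact_mod_cast hl0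
  have q1 : (l : ℂ) ^ 2 - 1 ≠ 0 := by
    have : l ^ 2 - 1 ≠ 0 := by linarith
    exact_mod_cast this
  have q2 : 8 * (l : ℂ) ^ 2 + 1 ≠ 0 := by
    have : 8 * l ^ 2 + 1 ≠ 0 := by positivity
    exact_mod_cast this
  have q3 : 9 - 8 * (l : ℂ) ^ 2 ≠ 0 := by
    have : 9 - 8 * l ^ 2 ≠ 0 := by nlinarith
    exact_mod_cast this
  generalize (l : ℂ) = m at *
  have w0 : w ≠ 0 := by
    rintro rfl
    norm_num at hw
  constructor
  · obtain ⟨r, hr⟩ := IsAlgClosed.exists_pow_nat_eq (m * w) (n := 2) (by norm_num)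
    have r0 : r ≠ 0 := by
      rintro rfl
      have : m * w = 0 := by rw [← hr]; ring
      simp_all
    refine ⟨r, by simp [G1, hr], ?_, ?_⟩
    · have : (G1 m w).derivative.eval r = 8 * (m ^ 2 - 1) * r := by
        simp [G1, hr]
        linear_combination (-8) * m ^ 2 * r * hw
      rw [this]
      simp_all
    · have : (G2 m w).eval r = ((2 * (2 * m - w) ^ 2 - 1) * (m * w) - 1)
          * (m * w - (2 * w ^ 2 - 1)) := by
        simp [G2, hr]
      rw [this]
      apply mul_ne_zero
      · intro h
        have h1 : 3 * m * w = 4 * m ^ 2 - 1 := by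
          linear_combination -h - 2 * m * (2 * m - w) * hw
        have : (8 * m ^ 2 + 1) * (m ^ 2 - 1) = 0 := by
          linear_combination (-9 * m ^ 2) * hw + (3 * m * w + 4 * m ^ 2 - 1 - 6 * m ^ 2) * h1
        simp_all
      · intro h
        have h1 : m * w = 1 := by linear_combination (-1/3) * h - (2/3) * hw
        apply q1
        linear_combination (-1 : ℂ) * m ^ 2 * hw + (m * w + 1 - 2 * m ^ 2) * h1
  · obtain ⟨r, hr⟩ := IsAlgClosed.exists_pow_nat_eq (2 * w ^ 2 - 1) (n := 2) (by norm_num)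
    have hp : (2 * (2 * m - w) ^ 2 - 1) * (2 * w ^ 2 - 1) = 9 - 8 * m ^ 2 := by
      have e : w * (2 * m - w) = 1 := by linear_combination -hw
      linear_combination (4 * (w * (2 * m - w) + 1) + 4) * e
    have r0 : r ≠ 0 := by
      rintro rfl
      apply q3
      rw [← hp, ← hr]; ring
    refine ⟨r, by simp [G2, hr], ?_⟩
    have : (G2 m w).derivative.eval r = - 16 * (m ^ 2 - 1) * r := by
      simp [G2, hr, Polynomial.derivative_pow]
      linear_combination 2 * r * hp
    rw [this]
    simp_all

theorem ideal_prime (l : ℚ) (hl0 : l ≠ 0) (hl1 : l ^ 2 < 1) :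
    (Ideal.span ({1 - X 0 ^ 2 - X 1 ^ 2 + 2 * C (l : ℂ) * X 0 * X 1,
        4 * X 2 ^ 2 - 2 * X 0 ^ 2 - 2 * X 1 ^ 2 + 1,
        4 * X 3 ^ 2 - 2 * X 0 ^ 2 - 2 + X 1 ^ 2} :
        Set (MvPolynomial (Fin 4) ℂ))).IsPrime := by
  obtain ⟨w, hw⟩ : ∃ w : ℂ, w ^ 2 = 2 * (l : ℂ) * w - 1 := by
    obtain ⟨r, hr⟩ := IsAlgClosed.exists_pow_nat_eq ((l : ℂ) ^ 2 - 1) (n := 2) (by norm_num)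
    exact ⟨l + r, by linear_combination hr⟩
  obtain ⟨⟨r1, h11, h12, h13⟩, ⟨r2, h21, h22⟩⟩ := roots_exist l hl0 hl1 w hw
  have q1 : (l : ℂ) ^ 2 - 1 ≠ 0 := by
    have : l ^ 2 - 1 ≠ 0 := by linarith
    exact_mod_cast this
  generalize (l : ℂ) = m at *
  have hδ2 : (2 * w - 2 * m) ^ 2 = 4 * (m ^ 2 - 1) := by linear_combination 4 * hw
  have hδ : (2 * w - 2 * m) ≠ 0 := by
    intro h
    rw [h] at hδ2
    apply q1
    linear_combination (-1/4) * hδ2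
  obtain ⟨e, he⟩ : ∃ e : ℂ, e * (2 * w - 2 * m) = 1 := ⟨_, inv_mul_cancel₀ hδ⟩
  set I := Ideal.span ({1 - X 0 ^ 2 - X 1 ^ 2 + 2 * C m * X 0 * X 1,
        4 * X 2 ^ 2 - 2 * X 0 ^ 2 - 2 * X 1 ^ 2 + 1,
        4 * X 3 ^ 2 - 2 * X 0 ^ 2 - 2 + X 1 ^ 2} :
        Set (MvPolynomial (Fin 4) ℂ)) with hI
  -- the function field
  let Ω := AlgebraicClosure (RatFunc ℂ)
  let u : Ω := algebraMap (RatFunc ℂ) Ω (algebraMap (Polynomial ℂ) (RatFunc ℂ) Polynomial.X)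
  have hu : ∀ p : Polynomial ℂ, Polynomial.aeval u p =
      algebraMap (RatFunc ℂ) Ω (algebraMap (Polynomial ℂ) (RatFunc ℂ) p) := by
    intro p
    simp only [u]
    rw [Polynomial.aeval_algebraMap_apply, Polynomial.aeval_algebraMap_apply]
    simp
  have u0 : u ≠ 0 := by
    simp only [u]
    simpa using RatFunc.X_ne_zero
  obtain ⟨s, hs⟩ := IsAlgClosed.exists_pow_nat_eq (Polynomial.aeval u (G1 m w)) (n := 2) (by norm_num)
  obtain ⟨t, ht⟩ := IsAlgClosed.exists_pow_nat_eq (Polynomial.aeval u (G2 m w)) (n := 2) (by norm_num)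
  have indep : ∀ a b c d : Polynomial ℂ, Polynomial.aeval u a + Polynomial.aeval u b * s
      + Polynomial.aeval u c * t + Polynomial.aeval u d * (s * t) = 0 →
      a = 0 ∧ b = 0 ∧ c = 0 ∧ d = 0 := by
    intro a b c d h
    rw [hu] at hs ht
    simp only [hu] at h
    have := biquad_indep _ _ s t hs ht (nonsquare_of_simple_root _ r1 h11 h12)
      (nonsquare_of_simple_root _ r2 h21 h22) (by
        rw [← map_mul]
        apply nonsquare_of_simple_root _ r1
        · simp [h11]
        · simp [h11, h12, h13]) _ _ _ _ h
    simpa using this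
  let k : ℂ →+* Ω := algebraMap ℂ Ω
  have kw : k w ^ 2 = 2 * k m * k w - 1 := by
    simpa [map_ofNat k] using congrArg k hw
  have ke : k e * (2 * k w - 2 * k m) = 1 := by
    simpa [map_ofNat k] using congrArg k he
  let φ : MvPolynomial (Fin 4) ℂ →ₐ[ℂ] Ω := aeval ![k e * (k w * u⁻¹ - (2 * k m - k w) * u),
    k e * (u⁻¹ - u), s * u⁻¹ * k e / 2, t * u⁻¹ * k e / 2]
  have hφ0 : φ (X 0) = k e * (k w * u⁻¹ - (2 * k m - k w) * u) := by simp [φ]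
  have hφ1 : φ (X 1) = k e * (u⁻¹ - u) := by simp [φ]
  have hφ2 : φ (X 2) = s * u⁻¹ * k e / 2 := by simp [φ]
  have hφ3 : φ (X 3) = t * u⁻¹ * k e / 2 := by simp [φ]
  have hφC : ∀ z, φ (C z) = k z := by intro z; simp [φ, k]
  have hG1 : Polynomial.aeval u (G1 m w) = 4 * ((k m * (2 * k m - k w)) * u ^ 2 - 1)
      * (u ^ 2 - k m * k w) := by
    exact aeval_G1 m w u
  have hG2 : Polynomial.aeval u (G2 m w) = ((2 * (2 * k m - k w) ^ 2 - 1) * u ^ 2 - 1)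
      * (u ^ 2 - (2 * k w ^ 2 - 1)) := by
    exact aeval_G2 m w u
  have uinv : u * u⁻¹ = 1 := mul_inv_cancel₀ u0
  obtain ⟨i1, i2, i3⟩ := conic_identities (k m) (k w) (k e) u u⁻¹ _ _ kw ke uinv hφ0 hφ1
  have i4 : u⁻¹ ^ 2 * k e ^ 2 * ((2 * k w - 2 * k m) ^ 2 * u ^ 2) = 1 := by
    have : u⁻¹ ^ 2 * k e ^ 2 * ((2 * k w - 2 * k m) ^ 2 * u ^ 2)
      = (u * u⁻¹) ^ 2 * (k e * (2 * k w - 2 * k m)) ^ 2 := by ring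
    rw [this, uinv, ke]; ring
  have hIφ : ∀ a ∈ I, φ a = 0 := by
    have : I ≤ RingHom.ker φ := by
      rw [hI, Ideal.span_le]
      rintro p (rfl | rfl | rfl)
      · change φ _ = 0
        simpa only [map_add, map_sub, map_mul, map_pow, map_one, map_ofNat φ, hφC] using i1
      · change φ _ = 0
        simp only [map_add, map_sub, map_mul, map_pow, map_one, map_ofNat φ, hφ2]
        linear_combination (u⁻¹ ^ 2 * k e ^ 2) * (hs.trans hG1) - (u⁻¹ ^ 2 * k e ^ 2) * i2
          + (2 * φ (X 0) ^ 2 + 2 * φ (X 1) ^ 2 - 1) * i4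
      · change φ _ = 0
        simp only [map_add, map_sub, map_mul, map_pow, map_one, map_ofNat φ, hφ3]
        linear_combination (u⁻¹ ^ 2 * k e ^ 2) * (ht.trans hG2) - (u⁻¹ ^ 2 * k e ^ 2) * i3
          + (2 * φ (X 0) ^ 2 + 2 - φ (X 1) ^ 2) * i4
    exact this
  -- the coordinate ring
  let A := MvPolynomial (Fin 4) ℂ ⧸ I
  let π : MvPolynomial (Fin 4) ℂ →ₐ[ℂ] A := Ideal.Quotient.mkₐ ℂ I
  let ψ : A →ₐ[ℂ] Ω := Ideal.Quotient.liftₐ I φ hIφ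
  have hψ : ∀ p, ψ (π p) = φ p := fun p => rfl
  let κ : ℂ →+* A := algebraMap ℂ A
  have κw : κ w ^ 2 = 2 * κ m * κ w - 1 := by
    simpa [map_ofNat κ] using congrArg κ hw
  have κe : κ e * (2 * κ w - 2 * κ m) = 1 := by
    simpa [map_ofNat κ] using congrArg κ he
  have hψκ : ∀ z, ψ (κ z) = k z := fun z => ψ.commutes z
  have hπC : ∀ z, π (C z) = κ z := fun z => rfl
  have E1 : 1 - π (X 0) ^ 2 - π (X 1) ^ 2 + 2 * κ m * π (X 0) * π (X 1) = 0 := by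
    have : π (1 - X 0 ^ 2 - X 1 ^ 2 + 2 * C m * X 0 * X 1) = 0 :=
      Ideal.Quotient.eq_zero_iff_mem.mpr (Ideal.subset_span (by simp))
    simpa [hπC, map_ofNat π] using this
  have E2 : 4 * π (X 2) ^ 2 - 2 * π (X 0) ^ 2 - 2 * π (X 1) ^ 2 + 1 = 0 := by
    have : π (4 * X 2 ^ 2 - 2 * X 0 ^ 2 - 2 * X 1 ^ 2 + 1) = 0 :=
      Ideal.Quotient.eq_zero_iff_mem.mpr (Ideal.subset_span (by simp))
    simpa [map_ofNat π] using this
  have E3 : 4 * π (X 3) ^ 2 - 2 * π (X 0) ^ 2 - 2 + π (X 1) ^ 2 = 0 := by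
    have : π (4 * X 3 ^ 2 - 2 * X 0 ^ 2 - 2 + X 1 ^ 2) = 0 :=
      Ideal.Quotient.eq_zero_iff_mem.mpr (Ideal.subset_span (by simp))
    simpa [map_ofNat π] using this
  obtain ⟨x, hx⟩ : ∃ x, x = π (X 0) := ⟨_, rfl⟩
  obtain ⟨y, hy⟩ : ∃ x, x = π (X 1) := ⟨_, rfl⟩
  obtain ⟨t1, ht1⟩ : ∃ x, x = π (X 2) := ⟨_, rfl⟩
  obtain ⟨t2, ht2⟩ : ∃ x, x = π (X 3) := ⟨_, rfl⟩
  rw [← hx, ← hy] at E1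
  rw [← hx, ← hy, ← ht1] at E2
  rw [← hx, ← hy, ← ht2] at E3
  obtain ⟨U, hU⟩ : ∃ U, U = x - κ w * y := ⟨_, rfl⟩
  obtain ⟨V, hV⟩ : ∃ V, V = x - (2 * κ m - κ w) * y := ⟨_, rfl⟩
  obtain ⟨S, hS⟩ : ∃ S, S = 2 * (2 * κ w - 2 * κ m) * U * t1 := ⟨_, rfl⟩
  obtain ⟨T, hT⟩ : ∃ T, T = 2 * (2 * κ w - 2 * κ m) * U * t2 := ⟨_, rfl⟩
  have hUV : U * V = 1 := by
    rw [hU, hV]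
    linear_combination (-1 : A) * E1 - y ^ 2 * κw
  have hUG1 : Polynomial.aeval U (G1 m w) = 4 * ((κ m * (2 * κ m - κ w)) * U ^ 2 - 1)
      * (U ^ 2 - κ m * κ w) := by
    exact aeval_G1 m w U
  have hUG2 : Polynomial.aeval U (G2 m w) = ((2 * (2 * κ m - κ w) ^ 2 - 1) * U ^ 2 - 1)
      * (U ^ 2 - (2 * κ w ^ 2 - 1)) := by
    exact aeval_G2 m w U
  have hxUV : x = κ e * (κ w * V - (2 * κ m - κ w) * U) := by
    rw [hU, hV]
    linear_combination (-x) * κe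
  have hyUV : y = κ e * (V - U) := by
    rw [hU, hV]
    linear_combination (-y) * κe
  obtain ⟨_, j2, j3⟩ := conic_identities (κ m) (κ w) (κ e) U V x y κw κe hUV hxUV hyUV
  have hS2 : S ^ 2 = Polynomial.aeval U (G1 m w) := by
    rw [hUG1, hS, ← j2]
    linear_combination ((2 * κ w - 2 * κ m) ^ 2 * U ^ 2) * E2
  have hT2 : T ^ 2 = Polynomial.aeval U (G2 m w) := by
    rw [hUG2, hT, ← j3]
    linear_combination ((2 * κ w - 2 * κ m) ^ 2 * U ^ 2) * E3
  have κ2 : κ (1/2) * 2 = 1 := by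
    rw [← map_ofNat κ 2, ← map_mul]; norm_num
  have ht1S : t1 = κ (1/2) * (κ e * (V * S)) := by
    rw [hS]
    linear_combination (-t1) * κ2 - t1 * κ (1/2) * 2 * κe
      - κ (1/2) * 2 * t1 * κ e * (2 * κ w - 2 * κ m) * hUV
  have ht2T : t2 = κ (1/2) * (κ e * (V * T)) := by
    rw [hT]
    linear_combination (-t2) * κ2 - t2 * κ (1/2) * 2 * κe
      - κ (1/2) * 2 * t2 * κ e * (2 * κ w - 2 * κ m) * hUV
  have nf : ∀ p, HasNF U S T (π p) := by
    intro p
    induction p using MvPolynomial.induction_on with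
    | C a =>
      rw [hπC, ← mul_one (κ a)]
      exact HasNF.one.smul a
    | add p q hp hq =>
      rw [map_add]
      exact hp.add hq
    | mul_X p i hp =>
      rw [map_mul, mul_comm]
      fin_cases i
      · change HasNF U S T (π (X 0) * π p)
        rw [← hx, hxUV]
        have : κ e * (κ w * V - (2 * κ m - κ w) * U) * π p
          = κ e * (κ w * (V * π p) + κ (w - 2 * m) * (U * π p)) := by
          simp only [map_sub, map_mul, map_ofNat]
          ring
        rw [this]
        exact (((hp.v_mul hUV).smul w).add (hp.u_mul.smul _)).smul e
      · change HasNF U S T (π (X 1) * π p)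
        rw [← hy, hyUV]
        have : κ e * (V - U) * π p = κ e * ((V * π p) + κ (-1) * (U * π p)) := by
          simp only [map_neg, map_one]
          ring
        rw [this]
        exact ((hp.v_mul hUV).add (hp.u_mul.smul _)).smul e
      · change HasNF U S T (π (X 2) * π p)
        rw [← ht1, ht1S, mul_assoc, mul_assoc, mul_assoc]
        exact (((hp.S_mul _ hS2).v_mul hUV).smul _).smul _
      · change HasNF U S T (π (X 3) * π p)
        rw [← ht2, ht2T, mul_assoc, mul_assoc, mul_assoc]
        exact (((hp.T_mul _ hT2).v_mul hUV).smul _).smul _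
  have hψU : ψ U = u := by
    rw [hU, hx, hy]
    simp only [map_sub, map_mul, hψ, hψκ, hφ0, hφ1]
    linear_combination u * ke
  have hψS : ψ S = s := by
    rw [hS, ht1]
    simp only [map_sub, map_mul, hψ, hψκ, hφ2, hψU, map_ofNat]
    have : u * u⁻¹ = 1 := mul_inv_cancel₀ u0
    linear_combination s * ke * (u * u⁻¹) + s * this
  have hψT : ψ T = t := by
    rw [hT, ht2]
    simp only [map_sub, map_mul, hψ, hψκ, hφ3, hψU, map_ofNat]
    have : u * u⁻¹ = 1 := mul_inv_cancel₀ u0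
    linear_combination t * ke * (u * u⁻¹) + t * this
  have inj : Function.Injective ψ := by
    rw [injective_iff_map_eq_zero]
    intro z hz
    obtain ⟨p, rfl⟩ := Ideal.Quotient.mk_surjective z
    obtain ⟨n, a, b, c, d, h⟩ := nf p
    have h' := congrArg ψ h
    have hz' : ψ (π p) = 0 := hz
    simp only [map_add, map_mul, hz', mul_zero, ← Polynomial.aeval_algHom_apply, hψU, hψS,
      hψT] at h'
    obtain ⟨rfl, rfl, rfl, rfl⟩ := indep a b c d h'.symm
    simp only [map_zero, zero_mul, add_zero] at h
    have h1 : V ^ n * U ^ n = 1 := by rw [← mul_pow, mul_comm, hUV, one_pow]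
    change π p = 0
    calc π p = V ^ n * U ^ n * π p := by rw [h1, one_mul]
      _ = 0 := by rw [mul_assoc, h, mul_zero]
  have dom : IsDomain A := inj.isDomain ψ.toRingHom
  exact (Ideal.Quotient.isDomain_iff_prime I).mp dom

/-- For rational `λ ≠ 0` with `λ² < 1`, the affine curve `X₁₂ ⊂ ℂ⁴` defined by
`1 − x² − y² + 2λxy = 0`, `4t₁² − 2x² − 2y² + 1 = 0` and `4t₂² − 2x² − 2 + y² = 0`
is irreducible: the zero locus of the ideal generated by these three polynomials
in `Spec ℂ[x, y, t₁, t₂]` is an irreducible closed set. -/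
theorem curve_X12_irreducible (l : ℚ) (hl0 : l ≠ 0) (hl1 : l ^ 2 < 1) :
    IsIrreducible (PrimeSpectrum.zeroLocus
      ({1 - X 0 ^ 2 - X 1 ^ 2 + 2 * C (l : ℂ) * X 0 * X 1,
        4 * X 2 ^ 2 - 2 * X 0 ^ 2 - 2 * X 1 ^ 2 + 1,
        4 * X 3 ^ 2 - 2 * X 0 ^ 2 - 2 + X 1 ^ 2} :
        Set (MvPolynomial (Fin 4) ℂ))) := by
  rw [← PrimeSpectrum.zeroLocus_span]
  have hp := ideal_prime l hl0 hl1
  exact (PrimeSpectrum.isIrreducible_zeroLocus_iff_of_radical _ hp.isRadical).mpr hp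
end
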